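/- A graph G is a 3-leaf power if and only if G contains no induced bull, dart, gem, or chordless cycle of length at least 4. -/

import Mathlib

open SimpleGraph

/-- `b` is a leaf of `T`: it has at most one neighbour. -/
def IsTreeLeaf {β : Type} (T : SimpleGraph β) (b : β) : Prop :=
  ∀ c d, T.Adj b c → T.Adj b d → c = d

/-- `G` is a `k`-leaf power: there is a tree `T` whose set of leaves is exactly the
(injective) image of the vertex set of `G`, with two vertices adjacent in `G` iff the
corresponding leaves are at distance at most `k` in `T`. -/
def IsKLeafPower {V : Type} (k : ℕ) (G : SimpleGraph V) : Prop :=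
  ∃ (β : Type) (T : SimpleGraph β) (f : V → β), T.IsTree ∧ Function.Injective f ∧
    (∀ b, IsTreeLeaf T b ↔ b ∈ Set.range f) ∧
    (∀ u v, G.Adj u v ↔ (u ≠ v ∧ T.dist (f u) (f v) ≤ k))

/-- The bull: a triangle `0,1,2` with pendant vertices `3` (on `1`) and `4` (on `2`). -/
def bull : SimpleGraph (Fin 5) :=
  SimpleGraph.fromRel (fun a b => (a, b) ∈ ([(0,1),(0,2),(1,2),(1,3),(2,4)] : List (Fin 5 × Fin 5)))

/-- The dart: a diamond `0,1,2,3` (missing edge `(0,1)`) plus a pendant vertex `4`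
adjacent to the degree-3 vertex `2`. -/
def dart : SimpleGraph (Fin 5) :=
  SimpleGraph.fromRel (fun a b => (a, b) ∈ ([(0,2),(0,3),(1,2),(1,3),(2,3),(2,4)] : List (Fin 5 × Fin 5)))

/-- The gem: a path `0-1-2-3` plus a dominating vertex `4`. -/
def gem : SimpleGraph (Fin 5) :=
  SimpleGraph.fromRel (fun a b => (a, b) ∈ ([(0,1),(1,2),(2,3),(0,4),(1,4),(2,4),(3,4)] : List (Fin 5 × Fin 5)))

/-- A graph is a 3-leaf power iff it is {bull, dart, gem, chordless `C≥4`}-free. -/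
def Is3LeafPower {V : Type*} (H : SimpleGraph V) : Prop :=
  IsEmpty (bull ↪g H) ∧ IsEmpty (dart ↪g H) ∧ IsEmpty (gem ↪g H) ∧
    ∀ n, 4 ≤ n → IsEmpty (SimpleGraph.cycleGraph n ↪g H)

/-- The closed neighbourhood of a vertex. -/
def closedNbhd {V : Type*} (G : SimpleGraph V) (v : V) : Set V := {w | w = v ∨ G.Adj v w}

/-- `G` is obtained from the graph `F` by replacing its vertices with (possibly empty) cliques,
where `g` records which clique a vertex belongs to. -/
def IsCliqueSubstitution {V κ : Type*} (G : SimpleGraph V) (F : SimpleGraph κ) (g : V → κ) : Prop :=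
  ∀ u v, G.Adj u v ↔ u ≠ v ∧ (g u = g v ∨ F.Adj (g u) (g v))

section Cycles

theorem cycleGraph_adj_iff_val {n : ℕ} (hn : 3 ≤ n) (u v : Fin n) :
    (cycleGraph n).Adj u v ↔ u.val + 1 = v.val ∨ v.val + 1 = u.val ∨
      (u.val = 0 ∧ v.val + 1 = n) ∨ (v.val = 0 ∧ u.val + 1 = n) := by
  rw [cycleGraph_adj']
  have hu := u.isLt
  have hv := v.isLt
  rcases lt_trichotomy u v with h | h | h
  · have h' : u.val < v.val := h
    rw [Fin.coe_sub_iff_lt.2 h, Fin.sub_val_of_le h.le]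
    omega
  · subst h
    rw [Fin.sub_val_of_le le_rfl]
    omega
  · have h' : v.val < u.val := h
    rw [Fin.coe_sub_iff_lt.2 h, Fin.sub_val_of_le h.le]
    omega

theorem exists_separating_cycleGraph {n : ℕ} (hn : 4 ≤ n) (u v : Fin n)
    (h : (cycleGraph n).Adj u v) :
    ∃ w, w ≠ v ∧ (cycleGraph n).Adj u w ∧ ¬ (cycleGraph n).Adj v w := by
  simp only [cycleGraph_adj_iff_val (show 3 ≤ n by omega)] at h ⊢
  have hu := u.isLt
  have hv := v.isLt
  by_cases h1 : u.val + 1 = v.val ∨ (v.val = 0 ∧ u.val + 1 = n)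
  · by_cases h0 : u.val = 0
    · refine ⟨⟨n - 1, by omega⟩, ?_, ?_, ?_⟩ <;> simp only [ne_eq, Fin.ext_iff] <;> omega
    · refine ⟨⟨u.val - 1, by omega⟩, ?_, ?_, ?_⟩ <;> simp only [ne_eq, Fin.ext_iff] <;> omega
  · by_cases h0 : u.val + 1 = n
    · refine ⟨⟨0, by omega⟩, ?_, ?_, ?_⟩ <;> simp only [ne_eq, Fin.ext_iff, true_and] <;> omega
    · refine ⟨⟨u.val + 1, by omega⟩, ?_, Or.inl rfl, ?_⟩ <;> simp only [ne_eq, Fin.ext_iff] <;> omega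

theorem cycleGraph_isContained_of_chord {κ : Type*} {F : SimpleGraph κ} {n : ℕ} (hn : 3 ≤ n)
    (f : Copy (cycleGraph n) F) {i j : Fin n} (hij : i.val + 2 ≤ j.val)
    (h : F.Adj (f i) (f j)) : cycleGraph (j.val - i.val + 1) ⊑ F := by
  have hj := j.isLt
  let e : Fin (j.val - i.val + 1) → Fin n := fun k => ⟨i.val + k.val, by have := k.isLt; omega⟩
  have adj_succ (a b : Fin (j.val - i.val + 1)) (hab : a.val + 1 = b.val) :
      F.Adj (f (e a)) (f (e b)) :=
    f.toHom.map_adj <| (cycleGraph_adj_iff_val hn _ _).2 <| Or.inl <| by simp only [e]; omega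
  have adj_ends (a b : Fin (j.val - i.val + 1)) (ha : a.val = 0)
      (hb : b.val + 1 = j.val - i.val + 1) : F.Adj (f (e a)) (f (e b)) := by
    have h1 : e a = i := Fin.ext (by simp only [e]; omega)
    have h2 : e b = j := Fin.ext (by simp only [e]; omega)
    rwa [h1, h2]
  refine ⟨⟨⟨fun k => f (e k), fun {a b} hab => ?_⟩, fun a b hab => ?_⟩⟩
  · rcases (cycleGraph_adj_iff_val (by omega) _ _).1 hab with h' | h' | ⟨h', h''⟩ | ⟨h', h''⟩
    · exact adj_succ a b h'
    · exact (adj_succ b a h').symm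
    · exact adj_ends a b h' h''
    · exact (adj_ends b a h' h'').symm
  · have := congrArg Fin.val (f.injective hab)
    simp only [e] at this
    exact Fin.ext (by omega)

/-- A shortest cycle is induced. -/
theorem isAcyclic_of_isEmpty_cycleGraph_embedding {κ : Type*} (F : SimpleGraph κ)
    (h : ∀ n, 3 ≤ n → IsEmpty (cycleGraph n ↪g F)) : F.IsAcyclic := by
  classical
  by_contra hF
  have hex : ∃ n, 3 ≤ n ∧ cycleGraph n ⊑ F := by
    rw [isAcyclic_iff_free_cycleGraph] at hF
    simpa [SimpleGraph.Free] using hF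
  obtain ⟨hn, ⟨f⟩⟩ := Nat.find_spec hex
  have hmin (m : ℕ) (hm : m < Nat.find hex) : ¬ (3 ≤ m ∧ cycleGraph m ⊑ F) := Nat.find_min hex hm
  generalize Nat.find hex = n at *
  have key (i j : Fin n) (hlt : i < j) (hF : F.Adj (f i) (f j)) : (cycleGraph n).Adj i j := by
    rw [cycleGraph_adj_iff_val hn]
    have hlt' : i.val < j.val := hlt
    have := j.isLt
    by_contra hna
    exact hmin (j.val - i.val + 1) (by omega)
      ⟨by omega, cycleGraph_isContained_of_chord hn f (by omega) hF⟩
  refine (h n hn).false ⟨⟨f, f.injective⟩, fun {a b} => ⟨fun hab => ?_, fun hab => f.toHom.map_adj hab⟩⟩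
  rcases lt_trichotomy a b with hlt | heq | hlt
  · exact key a b hlt hab
  · subst heq
    exact absurd hab (F.irrefl)
  · exact (key b a hlt hab.symm).symm

end Cycles

section LeafDistances

theorem dist_le_three_iff {β : Type*} {T : SimpleGraph β} (hT : T.Connected) {a b p q : β}
    (hab : a ≠ b) (ha : ∀ c, T.Adj a c ↔ c = p) (hb : ∀ c, T.Adj b c ↔ c = q) :
    T.dist a b ≤ 3 ↔ p = q ∨ T.Adj p q := by
  have hap := (ha p).2 rfl
  have hbq := (hb q).2 rfl
  constructor
  · intro h
    obtain ⟨w, hw⟩ := hT.exists_walk_length_eq_dist a b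
    rw [← hw] at h
    match w, h with
    | .nil, _ => exact absurd rfl hab
    | .cons h₁ .nil, _ =>
      rw [← (ha _).1 h₁, ← (hb _).1 h₁.symm]
      exact Or.inr h₁.symm
    | .cons h₁ (.cons h₂ .nil), _ =>
      exact Or.inl (((ha _).1 h₁).symm.trans ((hb _).1 h₂.symm))
    | .cons h₁ (.cons h₂ (.cons h₃ .nil)), _ =>
      rw [(ha _).1 h₁, (hb _).1 h₃.symm] at h₂
      exact Or.inr h₂
    | .cons _ (.cons _ (.cons _ (.cons _ _))), h =>
      simp only [Walk.length_cons] at h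
      omega
  · rintro (rfl | h)
    · exact (dist_le (.cons hap (.cons hbq.symm .nil))).trans (by simp)
    · exact (dist_le (.cons hap (.cons h (.cons hbq.symm .nil)))).trans (by simp)

theorem IsKLeafPower.exists_isCliqueSubstitution {V : Type} {G : SimpleGraph V}
    (h : IsKLeafPower 3 G) :
    ∃ (κ : Type) (F : SimpleGraph κ) (g : V → κ), F.IsAcyclic ∧ IsCliqueSubstitution G F g := by
  classical
  obtain ⟨β, T, f, hT, hf, hleaf, hadj⟩ := h
  have hex (v : V) : ∃ p, ∀ c, T.Adj (f v) c → T.Adj (f v) p := by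
    by_cases hc : ∃ c, T.Adj (f v) c
    · exact ⟨hc.choose, fun _ _ => hc.choose_spec⟩
    · exact ⟨f v, fun c hv => absurd ⟨c, hv⟩ hc⟩
  choose g hg using hex
  refine ⟨β, T, g, hT.isAcyclic, fun u v => ?_⟩
  rw [hadj]
  refine and_congr_right fun huv => ?_
  have hnbr (x : V) (y : β) (hxy : f x ≠ y) (c : β) : T.Adj (f x) c ↔ c = g x := by
    have : Nontrivial β := ⟨_, _, hxy⟩
    obtain ⟨d, hd⟩ := hT.connected.preconnected.exists_adj_of_nontrivial (f x)
    have hgx := hg x d hd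
    exact ⟨fun hc => (hleaf (f x)).2 ⟨x, rfl⟩ _ _ hc hgx, fun hc => hc ▸ hgx⟩
  exact dist_le_three_iff hT.connected (hf.ne huv) (hnbr u _ (hf.ne huv)) (hnbr v _ (hf.ne huv.symm))

end LeafDistances

section Construction

variable {V κ : Type} (F : SimpleGraph κ) (g : V → κ)

/-- The relation underlying `leafHost`. -/
def leafHostRel : V ⊕ (Option κ × ℤ) → V ⊕ (Option κ × ℤ) → Prop
  | .inl v, .inr (o, m) => o = some (g v) ∧ m = 0
  | .inr (o, m), .inl v => o = some (g v) ∧ m = 0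
  | .inr (o, m), .inr (o', m') =>
      (o = o' ∧ (m' = m + 1 ∨ m = m' + 1)) ∨
      (m = 0 ∧ m' = 0 ∧ o ≠ o' ∧ ∀ a b, o = some a → o' = some b → F.Adj a b)
  | .inl _, .inl _ => False

/-- A connected host graph for the tree of a clique substitution: the graph `F` with a universal
vertex added, a pendant vertex at `g v` for every `v`, and a two-way infinite path through every
vertex that ensures that only the pendant vertices are leaves. -/
def leafHost : SimpleGraph (V ⊕ (Option κ × ℤ)) where
  Adj := leafHostRel F g
  symm := ⟨by
    rintro (v | ⟨o, m⟩) (w | ⟨o', m'⟩) h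
    · exact h
    · exact h
    · exact h
    · rcases h with ⟨h1, h2⟩ | ⟨h1, h2, h3, h4⟩
      · exact Or.inl ⟨h1.symm, h2.symm⟩
      · exact Or.inr ⟨h2, h1, h3.symm, fun a b ha hb => (h4 b a hb ha).symm⟩⟩
  loopless := ⟨by
    rintro (v | ⟨o, m⟩) h
    · exact h
    · rcases h with ⟨h1, h2⟩ | ⟨h1, h2, h3, h4⟩
      · omega
      · exact h3 rfl⟩

theorem leafHost_connected : (leafHost F g).Connected := by
  have hline (o : Option κ) (m : ℤ) :
      (leafHost F g).Reachable (.inr (o, m)) (.inr (o, 0)) := by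
    induction m using Int.induction_on with
    | zero => rfl
    | succ i ih =>
      have hadj : (leafHost F g).Adj (.inr (o, i + 1)) (.inr (o, i)) := Or.inl ⟨rfl, Or.inr rfl⟩
      exact hadj.reachable.trans ih
    | pred i ih =>
      have hadj : (leafHost F g).Adj (.inr (o, -i - 1)) (.inr (o, -i)) :=
        Or.inl ⟨rfl, Or.inl (by omega)⟩
      exact hadj.reachable.trans ih
  have hcore (o : Option κ) : (leafHost F g).Reachable (.inr (o, 0)) (.inr (none, 0)) := by
    cases o with
    | none => rfl
    | some a => exact Adj.reachable (Or.inr ⟨rfl, rfl, by simp, by simp⟩)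
  have hall (x : V ⊕ (Option κ × ℤ)) : (leafHost F g).Reachable x (.inr (none, 0)) := by
    rcases x with v | ⟨o, m⟩
    · have hv : (leafHost F g).Adj (.inl v) (.inr (some (g v), 0)) := ⟨rfl, rfl⟩
      exact hv.reachable.trans (hcore _)
    · exact (hline o m).trans (hcore o)
  exact { preconnected := fun x y => (hall x).trans (hall y).symm, nonempty := ⟨.inr (none, 0)⟩ }

theorem exists_adj_crossing {β : Type*} {T : SimpleGraph β} (hT : T.Connected) (S : Set β)
    {a b : β} (ha : a ∈ S) (hb : b ∉ S) : ∃ x y, x ∈ S ∧ y ∉ S ∧ T.Adj x y := by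
  obtain ⟨w⟩ := hT a b
  obtain ⟨d, -, h1, h2⟩ := w.exists_boundary_dart S ha hb
  exact ⟨_, _, h1, h2, d.adj⟩

variable {F g} {T : SimpleGraph (V ⊕ (Option κ × ℤ))}

theorem adj_inl_iff_of_le_leafHost (hT : T.Connected) (hle : T ≤ leafHost F g) (v : V)
    (c : V ⊕ (Option κ × ℤ)) : T.Adj (.inl v) c ↔ c = .inr (some (g v), 0) := by
  have honly (c) (h : T.Adj (.inl v) c) : c = .inr (some (g v), 0) := by
    have h' := hle h
    rcases c with w | ⟨o, m⟩
    · exact h'.elim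
    · obtain ⟨rfl, rfl⟩ := h'
      rfl
  refine ⟨honly c, ?_⟩
  rintro rfl
  obtain ⟨x, y, hx, hy, hxy⟩ := exists_adj_crossing hT {.inl v} (a := .inl v)
    (b := .inr (none, 0)) rfl (by simp)
  obtain rfl : x = .inl v := hx
  rwa [honly y hxy] at hxy

theorem adj_line_of_le_leafHost (hT : T.Connected) (hle : T ≤ leafHost F g) (o : Option κ) (m : ℤ) :
    T.Adj (.inr (o, m)) (.inr (o, m + 1)) := by
  rcases le_or_gt 0 m with hm | hm
  · obtain ⟨x, y, ⟨k, hk, rfl⟩, hy, hxy⟩ := exists_adj_crossing hT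
      {x | ∃ k, m < k ∧ x = .inr (o, k)} (a := .inr (o, m + 1)) (b := .inr (o, m))
      ⟨_, by omega, rfl⟩ (by simp)
    have h' := hle hxy
    rcases y with w | ⟨o', m'⟩
    · have := h'.2
      omega
    · rcases h' with ⟨rfl, h2⟩ | ⟨h1, -⟩
      · have : ¬ m < m' := fun h => hy ⟨m', h, rfl⟩
        obtain rfl : m' = m := by omega
        obtain rfl : k = m' + 1 := by omega
        exact hxy.symm
      · omega
  · obtain ⟨x, y, ⟨k, hk, rfl⟩, hy, hxy⟩ := exists_adj_crossing hT
      {x | ∃ k, k ≤ m ∧ x = .inr (o, k)} (a := .inr (o, m)) (b := .inr (o, m + 1))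
      ⟨_, by omega, rfl⟩ (by simp)
    have h' := hle hxy
    rcases y with w | ⟨o', m'⟩
    · have := h'.2
      omega
    · rcases h' with ⟨rfl, h2⟩ | ⟨h1, -⟩
      · have : ¬ m' ≤ m := fun h => hy ⟨m', h, rfl⟩
        obtain rfl : k = m := by omega
        obtain rfl : m' = k + 1 := by omega
        exact hxy
      · omega

end Construction

theorem isAcyclic_map {α β : Type*} {F : SimpleGraph α} (hF : F.IsAcyclic) (e : α ↪ β) :
    (F.map e).IsAcyclic := by
  rw [isAcyclic_iff_free_cycleGraph] at hF ⊢
  rintro n hn ⟨f⟩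
  have hadj {i j : Fin n} (h : (cycleGraph n).Adj i j) :
      ∃ a b, F.Adj a b ∧ e a = f i ∧ e b = f j :=
    (map_adj _ _ _ _).1 (f.toHom.map_adj h)
  have hrange (i : Fin n) : ∃ a, e a = f i := by
    have : Nontrivial (Fin n) := Fin.nontrivial_iff_two_le.2 (by omega)
    obtain ⟨j, hj⟩ := (cycleGraph_preconnected (n := n)).exists_adj_of_nontrivial i
    obtain ⟨a, -, -, ha, -⟩ := hadj hj
    exact ⟨a, ha⟩
  choose g hg using hrange
  refine hF n hn ⟨⟨⟨g, fun {i j} hij => ?_⟩, fun i j hij => f.injective ?_⟩⟩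
  · obtain ⟨a, b, hab, ha, hb⟩ := hadj hij
    rwa [e.injective ((hg i).trans ha.symm), e.injective ((hg j).trans hb.symm)]
  · exact (hg i).symm.trans ((congrArg e hij).trans (hg j))

theorem IsCliqueSubstitution.isKLeafPower {V κ : Type} {G : SimpleGraph V} {F : SimpleGraph κ}
    {g : V → κ} (hF : F.IsAcyclic) (h : IsCliqueSubstitution G F g) : IsKLeafPower 3 G := by
  let e : κ ↪ V ⊕ (Option κ × ℤ) :=
    ⟨fun a => .inr (some a, 0), fun a b hab => by simpa using hab⟩
  obtain ⟨T, hFT, hTle, hT⟩ :=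
    (leafHost_connected F g).exists_isTree_le_of_le_of_isAcyclic (H := F.map e) (by
      rintro x y hxy
      obtain ⟨a, b, hab, rfl, rfl⟩ := (map_adj _ _ _ _).1 hxy
      refine Or.inr ⟨rfl, rfl, by simpa using hab.ne, ?_⟩
      rintro _ _ ⟨⟩ ⟨⟩
      exact hab) (isAcyclic_map hF e)
  have hinl := adj_inl_iff_of_le_leafHost hT.connected hTle
  have hline := adj_line_of_le_leafHost hT.connected hTle
  refine ⟨_, T, Sum.inl, hT, Sum.inl_injective, ?_, fun u v => ?_⟩
  · rintro (v | ⟨o, m⟩)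
    · exact iff_of_true (fun c d hc hd => ((hinl v c).1 hc).trans ((hinl v d).1 hd).symm) ⟨v, rfl⟩
    · refine iff_of_false (fun hl => ?_) (by simp)
      have h2 := hline o (m - 1)
      rw [sub_add_cancel] at h2
      have := hl _ _ (hline o m) h2.symm
      simp only [Sum.inr.injEq, Prod.mk.injEq, true_and] at this
      omega
  · rw [h]
    refine and_congr_right fun huv => ?_
    rw [dist_le_three_iff hT.connected (Sum.inl_injective.ne huv) (hinl u) (hinl v)]
    refine or_congr (by simp) ⟨fun hadj => ?_, fun hadj => ?_⟩
    · exact hFT ((map_adj_apply (f := e)).2 hadj)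
    · rcases hTle hadj with ⟨-, h2⟩ | ⟨-, -, -, h4⟩
      · omega
      · exact h4 _ _ rfl rfl

section Obstructions

variable {V W κ : Type*} {G : SimpleGraph V} {F : SimpleGraph κ} {g : V → κ}

theorem IsCliqueSubstitution.comp (h : IsCliqueSubstitution G F g) {H : SimpleGraph W}
    (e : H ↪g G) : IsCliqueSubstitution H F (g ∘ e) := fun u v => by
  rw [← e.map_adj_iff, h, e.injective.ne_iff]
  rfl

theorem IsCliqueSubstitution.ne_of_separated (h : IsCliqueSubstitution G F g) {u v w : V}
    (hwv : w ≠ v) (hu : G.Adj u w) (hv : ¬ G.Adj v w) : g u ≠ g v := fun heq =>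
  hv <| (h v w).2 ⟨hwv.symm, heq ▸ ((h u w).1 hu).2⟩

theorem IsCliqueSubstitution.false_of_triangle (h : IsCliqueSubstitution G F g) (hF : F.IsAcyclic)
    {a b c : V} (hab : G.Adj a b) (hac : G.Adj a c) (hbc : G.Adj b c) (h1 : g a ≠ g b)
    (h2 : g a ≠ g c) (h3 : g b ≠ g c) : False := by
  classical
  have h12 := ((h _ _).1 hab).2.resolve_left h1
  have h13 := ((h _ _).1 hac).2.resolve_left h2
  have h23 := ((h _ _).1 hbc).2.resolve_left h3
  exact hF.cliqueFree le_rfl _ (is3Clique_triple_iff.2 ⟨h12, h13, h23⟩)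

theorem IsCliqueSubstitution.is3LeafPower (hF : F.IsAcyclic) (h : IsCliqueSubstitution G F g) :
    Is3LeafPower G := by
  refine ⟨⟨fun e => ?_⟩, ⟨fun e => ?_⟩, ⟨fun e => ?_⟩, fun n hn => ⟨fun e => ?_⟩⟩
  · have he := h.comp e
    refine he.false_of_triangle (a := 0) (b := 1) (c := 2) hF ?_ ?_ ?_
      (he.ne_of_separated (w := 3) ?_ ?_ ?_).symm (he.ne_of_separated (w := 4) ?_ ?_ ?_).symm
      (he.ne_of_separated (w := 3) ?_ ?_ ?_) <;> simp [bull]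
  · have he := h.comp e
    refine he.false_of_triangle (a := 0) (b := 2) (c := 3) hF ?_ ?_ ?_
      (he.ne_of_separated (w := 1) ?_ ?_ ?_).symm (he.ne_of_separated (w := 1) ?_ ?_ ?_).symm
      (he.ne_of_separated (w := 4) ?_ ?_ ?_) <;> simp [dart]
  · have he := h.comp e
    refine he.false_of_triangle (a := 1) (b := 2) (c := 4) hF ?_ ?_ ?_
      (he.ne_of_separated (w := 0) ?_ ?_ ?_) (he.ne_of_separated (w := 3) ?_ ?_ ?_).symm
      (he.ne_of_separated (w := 0) ?_ ?_ ?_).symm <;> simp [gem]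
  · have he := h.comp e
    have hinj : Function.Injective (g ∘ e) := fun u v huv => by
      by_contra hne
      obtain ⟨w, hwv, hu, hv⟩ :=
        exists_separating_cycleGraph hn u v ((he u v).2 ⟨hne, Or.inl huv⟩)
      exact he.ne_of_separated hwv hu hv huv
    exact isAcyclic_iff_free_cycleGraph.1 hF n (by omega)
      ⟨⟨⟨g ∘ e, fun hab => ((he _ _).1 hab).2.resolve_left (hinj.ne hab.ne)⟩, hinj⟩⟩

end Obstructions

section Forbidden

variable {V : Type*} {G : SimpleGraph V}

/-- A map from a graph on `Fin n` is an embedding if it respects the pairs `i < j`. -/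
theorem nonempty_embedding_of_lt {n : ℕ} {H : SimpleGraph (Fin n)} (f : Fin n → V)
    (h : ∀ i j, i < j → f i ≠ f j ∧ (G.Adj (f i) (f j) ↔ H.Adj i j)) : Nonempty (H ↪g G) := by
  refine ⟨⟨⟨f, fun i j hij => ?_⟩, fun {i j} => ?_⟩⟩
  · rcases lt_trichotomy i j with hlt | heq | hlt
    · exact absurd hij (h i j hlt).1
    · exact heq
    · exact absurd hij.symm (h j i hlt).1
  · rcases lt_trichotomy i j with hlt | heq | hlt
    · exact (h i j hlt).2
    · subst heq
      simp
    · rw [G.adj_comm, H.adj_comm]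
      exact (h j i hlt).2

theorem Is3LeafPower.false_of_bull (hG : Is3LeafPower G) {a b c x y : V}
    (hab : G.Adj a b) (hac : G.Adj a c) (hbc : G.Adj b c)
    (hxa : G.Adj x a) (hxb : ¬ G.Adj x b) (hxc : ¬ G.Adj x c)
    (hyb : G.Adj y b) (hya : ¬ G.Adj y a) (hyc : ¬ G.Adj y c) (hxy : ¬ G.Adj x y) : False := by
  refine hG.1.false (nonempty_embedding_of_lt ![c, a, b, x, y] ?_).some
  simp [Fin.forall_fin_succ, bull]
  grind [G.adj_comm, G.irrefl]

theorem Is3LeafPower.false_of_dart (hG : Is3LeafPower G) {a b c x y : V}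
    (hab : G.Adj a b) (hac : G.Adj a c) (hbc : G.Adj b c)
    (hxa : G.Adj x a) (hxb : ¬ G.Adj x b) (hxc : ¬ G.Adj x c)
    (hyb : G.Adj y b) (hya : G.Adj y a) (hyc : ¬ G.Adj y c) (hne : y ≠ c)
    (hxy : ¬ G.Adj x y) : False := by
  refine hG.2.1.false (nonempty_embedding_of_lt ![c, y, a, b, x] ?_).some
  simp [Fin.forall_fin_succ, dart]
  grind [G.adj_comm, G.irrefl]

theorem Is3LeafPower.false_of_gem (hG : Is3LeafPower G) {a b c d x : V}
    (hab : G.Adj a b) (hbc : G.Adj b c) (hcd : G.Adj c d)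
    (hac : ¬ G.Adj a c) (had : ¬ G.Adj a d) (hbd : ¬ G.Adj b d)
    (hxa : G.Adj x a) (hxb : G.Adj x b) (hxc : G.Adj x c) (hxd : G.Adj x d) : False := by
  refine hG.2.2.1.false (nonempty_embedding_of_lt ![a, b, c, d, x] ?_).some
  simp [Fin.forall_fin_succ, gem]
  grind [G.adj_comm, G.irrefl]

theorem Is3LeafPower.false_of_square (hG : Is3LeafPower G) {a b c d : V}
    (hab : G.Adj a b) (hbc : G.Adj b c) (hcd : G.Adj c d) (hda : G.Adj d a)
    (hac : ¬ G.Adj a c) (hbd : ¬ G.Adj b d) (hne : a ≠ c) (hne' : b ≠ d) : False := by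
  refine (hG.2.2.2 4 le_rfl).false (nonempty_embedding_of_lt ![a, b, c, d] ?_).some
  simp [Fin.forall_fin_succ, cycleGraph_adj_iff_val]
  grind [G.adj_comm, G.irrefl]

theorem Is3LeafPower.false_of_single_single (hG : Is3LeafPower G) {a b c x y : V}
    (hab : G.Adj a b) (hac : G.Adj a c) (hbc : G.Adj b c)
    (hxa : G.Adj x a) (hxb : ¬ G.Adj x b) (hxc : ¬ G.Adj x c)
    (hyb : G.Adj y b) (hya : ¬ G.Adj y a) (hyc : ¬ G.Adj y c) : False := by
  by_cases hxy : G.Adj x y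
  · refine hG.false_of_square hxa hab hyb.symm hxy.symm hxb (fun h => hya h.symm) ?_ ?_
    · rintro rfl
      exact hxc hbc
    · rintro rfl
      exact hyc hac
  · exact hG.false_of_bull hab hac hbc hxa hxb hxc hyb hya hyc hxy

theorem Is3LeafPower.false_of_single_pair (hG : Is3LeafPower G) {a b c x y : V}
    (hab : G.Adj a b) (hac : G.Adj a c) (hbc : G.Adj b c)
    (hxa : G.Adj x a) (hxb : ¬ G.Adj x b) (hxc : ¬ G.Adj x c)
    (hya : G.Adj y a) (hyb : G.Adj y b) (hyc : ¬ G.Adj y c) (hne : y ≠ c) : False := by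
  by_cases hxy : G.Adj x y
  · exact hG.false_of_gem hxy hyb hbc hxb hxc hyc hxa.symm hya.symm hab hac
  · exact hG.false_of_dart hab hac hbc hxa hxb hxc hyb hya hyc hne hxy

theorem Is3LeafPower.false_of_pair_pair (hG : Is3LeafPower G) {a b c x y : V}
    (hab : G.Adj a b) (hac : G.Adj a c) (hbc : G.Adj b c)
    (hxa : G.Adj x a) (hxb : G.Adj x b) (hxc : ¬ G.Adj x c) (hne : x ≠ c)
    (hya : ¬ G.Adj y a) (hyb : G.Adj y b) (hyc : G.Adj y c) (hne' : y ≠ a) : False := by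
  by_cases hxy : G.Adj x y
  · exact hG.false_of_square hxa hac hyc.symm hxy.symm hxc (fun h => hya h.symm) hne hne'.symm
  · exact hG.false_of_gem hxa hac hyc.symm hxc hxy (fun h => hya h.symm) hxb.symm hab.symm hbc
      hyb.symm

theorem exists_separating_of_closedNbhd_ne {a b : V} (hab : G.Adj a b)
    (h : closedNbhd G a ≠ closedNbhd G b) :
    ∃ x, (G.Adj x a ∧ ¬ G.Adj x b ∧ x ≠ b) ∨ (G.Adj x b ∧ ¬ G.Adj x a ∧ x ≠ a) := by
  by_contra! hno
  refine h (Set.ext fun x => ?_)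
  simp only [closedNbhd, Set.mem_ofPred_eq]
  grind [G.adj_comm]

theorem Is3LeafPower.false_of_triangle (hG : Is3LeafPower G) {a b c : V}
    (hab : G.Adj a b) (hac : G.Adj a c) (hbc : G.Adj b c)
    (h1 : closedNbhd G a ≠ closedNbhd G b) (h2 : closedNbhd G a ≠ closedNbhd G c)
    (h3 : closedNbhd G b ≠ closedNbhd G c) : False := by
  obtain ⟨x, hx⟩ := exists_separating_of_closedNbhd_ne hab h1
  wlog hxab : G.Adj x a ∧ ¬ G.Adj x b ∧ x ≠ b generalizing a b
  · exact this hab.symm hbc hac h1.symm h3 h2 hx.symm (hx.resolve_left hxab)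
  obtain ⟨hxa, hxb, hxne⟩ := hxab
  by_cases hxc : G.Adj x c
  · obtain ⟨y, hy⟩ := exists_separating_of_closedNbhd_ne hac h2
    wlog hyac : G.Adj y a ∧ ¬ G.Adj y c ∧ y ≠ c generalizing a c
    · exact this hbc.symm hac.symm hab.symm h3.symm h2.symm h1.symm (Or.inl ⟨hxc, hxb, hxne⟩) hxc hxa
        hy.symm (hy.resolve_left hyac)
    obtain ⟨hya, hyc, hyne⟩ := hyac
    by_cases hyb : G.Adj y b
    · exact hG.false_of_pair_pair hac.symm hbc.symm hab hxc hxa hxb hxne hyc hya hyb hyne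
    · exact hG.false_of_single_pair hac hab hbc.symm hya hyc hyb hxa hxc hxb hxne
  · obtain ⟨y, hy⟩ := exists_separating_of_closedNbhd_ne hbc h3
    wlog hybc : G.Adj y b ∧ ¬ G.Adj y c ∧ y ≠ c generalizing b c
    · exact this hac hab hbc.symm h2 h1 h3.symm (Or.inl ⟨hxa, hxc, fun h => hxb (h ▸ hbc.symm)⟩)
        hxc (fun h => hxb (h ▸ hbc.symm)) hxb hy.symm (hy.resolve_left hybc)
    obtain ⟨hyb, hyc, hyne⟩ := hybc
    by_cases hya : G.Adj y a
    · exact hG.false_of_single_pair hab hac hbc hxa hxb hxc hya hyb hyc hyne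
    · exact hG.false_of_single_single hab hac hbc hxa hxb hxc hyb hya hyc

end Forbidden

section CriticalCliques

variable {V : Type*} (G : SimpleGraph V)

/-- The critical clique graph of `G`, whose vertices are the classes of true twins. -/
noncomputable def criticalCliqueGraph : SimpleGraph (Quotient (Setoid.ker (closedNbhd G))) :=
  G.comap Quotient.out

variable {G}

theorem closedNbhd_out_mk (v : V) :
    closedNbhd G (Quotient.mk (Setoid.ker (closedNbhd G)) v).out = closedNbhd G v :=
  Quotient.mk_out (s := Setoid.ker (closedNbhd G)) v

theorem closedNbhd_out_injective :
    Function.Injective fun q : Quotient (Setoid.ker (closedNbhd G)) => closedNbhd G q.out :=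
  fun q r h => by
    rw [← q.out_eq, ← r.out_eq]
    exact Quotient.sound h

theorem adj_of_closedNbhd_eq {u u' v v' : V} (hu : closedNbhd G u = closedNbhd G u')
    (hv : closedNbhd G v = closedNbhd G v') (huv : closedNbhd G u ≠ closedNbhd G v)
    (h : G.Adj u v) : G.Adj u' v' := by
  have hvu : v ∈ closedNbhd G u' := hu ▸ Or.inr h
  rcases hvu with rfl | hvu
  · exact absurd hu huv
  have huv' : u' ∈ closedNbhd G v' := hv ▸ Or.inr hvu.symm
  rcases huv' with rfl | huv'
  · exact absurd (hu.trans hv.symm) huv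
  exact huv'.symm

theorem isCliqueSubstitution_criticalCliqueGraph :
    IsCliqueSubstitution G (criticalCliqueGraph G) (Quotient.mk (Setoid.ker (closedNbhd G))) := by
  intro u v
  by_cases h : closedNbhd G u = closedNbhd G v
  · refine ⟨fun hadj => ⟨hadj.ne, Or.inl (Quotient.sound h)⟩, fun ⟨hne, _⟩ => ?_⟩
    have hv : v ∈ closedNbhd G u := h ▸ Or.inl rfl
    exact hv.resolve_left hne.symm
  · refine ⟨fun hadj => ⟨hadj.ne, Or.inr ?_⟩, fun ⟨_, hor⟩ => ?_⟩
    · exact adj_of_closedNbhd_eq (G := G) (closedNbhd_out_mk u).symm (closedNbhd_out_mk v).symm h hadj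
    · refine adj_of_closedNbhd_eq (closedNbhd_out_mk u) (closedNbhd_out_mk v) ?_
        (hor.resolve_left fun heq => h (Quotient.exact heq))
      rwa [closedNbhd_out_mk, closedNbhd_out_mk]

theorem Is3LeafPower.isAcyclic_criticalCliqueGraph (hG : Is3LeafPower G) :
    (criticalCliqueGraph G).IsAcyclic := by
  refine isAcyclic_of_isEmpty_cycleGraph_embedding _ fun n hn => ⟨fun e => ?_⟩
  let o : criticalCliqueGraph G ↪g G :=
    ⟨⟨Quotient.out, Quotient.out_injective⟩, Iff.rfl⟩
  rcases hn.eq_or_lt with rfl | hn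
  · have hadj (i j : Fin 3) (hij : i ≠ j) : G.Adj (o (e i)) (o (e j)) :=
      (Embedding.map_adj_iff (e.trans o)).2 (by rw [cycleGraph_three_eq_top]; exact hij)
    have hne (i j : Fin 3) (hij : i ≠ j) : closedNbhd G (o (e i)) ≠ closedNbhd G (o (e j)) :=
      closedNbhd_out_injective.ne (e.injective.ne hij)
    exact hG.false_of_triangle (hadj 0 1 (by decide)) (hadj 0 2 (by decide)) (hadj 1 2 (by decide))
      (hne 0 1 (by decide)) (hne 0 2 (by decide)) (hne 1 2 (by decide))
  · exact (hG.2.2.2 n hn).false (e.trans o)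

end CriticalCliques

theorem threeLeafPower_iff_forbidden_free {V : Type} (G : SimpleGraph V) :
    IsKLeafPower 3 G ↔ Is3LeafPower G := by
  refine ⟨fun h => ?_, fun h => ?_⟩
  · obtain ⟨κ, F, g, hF, hg⟩ := h.exists_isCliqueSubstitution
    exact hg.is3LeafPower hF
  · exact isCliqueSubstitution_criticalCliqueGraph.isKLeafPower h.isAcyclic_criticalCliqueGraph
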